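/- Let α ∈ ℝ and 0 < β ≤ 1/4. Suppose F₂(α,β) has Property A. If t ∈ 𝔗₁(F₁(α,β) − F₁(α,β)) and Θ_α(t) ≥ 0 on 𝕋², then t lies in 𝔘₁(F₁(α,β)), i.e. t is a uniform limit of functions |p_j|² with p_j ∈ 𝔗₁(F₁(α,β)). -/

import Mathlib

open Complex MeasureTheory Real Filter

noncomputable section

/-- The circle group `𝕋 = ℝ/ℤ`. -/
abbrev 𝕋 := AddCircle (1 : ℝ)

/-- `θ_α(j)` : the smallest integer minimizing `|θ_α(j) − jα|`
(the nearest integer to `jα`, rounding half down). -/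
def thetaA (α : ℝ) (j : ℤ) : ℤ := ⌈(j : ℝ) * α - 1 / 2⌉

/-- The Bohr set `F₁(α,β) = {j ∈ ℤ : |θ_α(j) − jα| < β}`. -/
def F1set (α β : ℝ) : Set ℤ := {j | |(thetaA α j : ℝ) - (j : ℝ) * α| < β}

/-- `F₂(α,β) = {(j,k) ∈ ℤ² : |k − jα| < β}`. -/
def F2set (α β : ℝ) : Set (ℤ × ℤ) := {jk | |(jk.2 : ℝ) - (jk.1 : ℝ) * α| < β}

/-- `t : 𝕋 → ℂ` is a trigonometric polynomial. -/
def IsTrigPoly1 (t : 𝕋 → ℂ) : Prop :=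
  ∃ c : ℤ →₀ ℂ, t = fun x => ∑ j ∈ c.support, c j * fourier j x

/-- The frequency set of `t : 𝕋 → ℂ`. -/
def freq1 (t : 𝕋 → ℂ) : Set ℤ := {j | fourierCoeff t j ≠ 0}

/-- `𝔗₁(F)` : trigonometric polynomials on `𝕋` with frequencies in `F`. -/
def T1 (F : Set ℤ) : Set (𝕋 → ℂ) := {t | IsTrigPoly1 t ∧ freq1 t ⊆ F}

/-- `t : 𝕋² → ℂ` is a trigonometric polynomial. -/
def IsTrigPoly2 (t : 𝕋 × 𝕋 → ℂ) : Prop :=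
  ∃ c : (ℤ × ℤ) →₀ ℂ, t = fun p => ∑ jk ∈ c.support, c jk * fourier jk.1 p.1 * fourier jk.2 p.2

/-- Fourier coefficient on the 2-torus. -/
def coeff2 (t : 𝕋 × 𝕋 → ℂ) (jk : ℤ × ℤ) : ℂ :=
  ∫ x : 𝕋, (∫ y : 𝕋, t (x, y) * fourier (-jk.1) x * fourier (-jk.2) y
    ∂AddCircle.haarAddCircle) ∂AddCircle.haarAddCircle

/-- The frequency set of `t : 𝕋² → ℂ`. -/
def freq2 (t : 𝕋 × 𝕋 → ℂ) : Set (ℤ × ℤ) := {jk | coeff2 t jk ≠ 0}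

/-- `𝔗₂(F)` : trigonometric polynomials on `𝕋²` with frequencies in `F`. -/
def T2 (F : Set (ℤ × ℤ)) : Set (𝕋 × 𝕋 → ℂ) := {t | IsTrigPoly2 t ∧ freq2 t ⊆ F}

/-- The map `Θ_α : 𝔗₁ → 𝔗₂`, `Θ_α(t)(x,y) = Σ_j t̂(j) e_j(x) e_{θ_α(j)}(y)`. -/
def Theta (α : ℝ) (t : 𝕋 → ℂ) : 𝕋 × 𝕋 → ℂ :=
  fun p => ∑' j : ℤ, fourierCoeff t j * fourier j p.1 * fourier (thetaA α j) p.2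

/-- `𝔖₁(F) = {|p|² : p ∈ 𝔗₁(F)}`. -/
def S1 (F : Set ℤ) : Set (𝕋 → ℂ) :=
  {f | ∃ p ∈ T1 F, f = fun x => p x * (starRingEnd ℂ) (p x)}

/-- `𝔖₂(F) = {|q|² : q ∈ 𝔗₂(F)}`. -/
def S2 (F : Set (ℤ × ℤ)) : Set (𝕋 × 𝕋 → ℂ) :=
  {f | ∃ q ∈ T2 F, f = fun p => q p * (starRingEnd ℂ) (q p)}

/-- `𝔘₁(F)` : trigonometric polynomials that are uniform limits of elements of `𝔖₁(F)`. -/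
def U1 (F : Set ℤ) : Set (𝕋 → ℂ) :=
  {t | IsTrigPoly1 t ∧ ∃ s : ℕ → (𝕋 → ℂ), (∀ n, s n ∈ S1 F) ∧ TendstoUniformly s t atTop}

/-- `𝔘₂(F)` : trigonometric polynomials that are uniform limits of elements of `𝔖₂(F)`. -/
def U2 (F : Set (ℤ × ℤ)) : Set (𝕋 × 𝕋 → ℂ) :=
  {t | IsTrigPoly2 t ∧ ∃ s : ℕ → (𝕋 × 𝕋 → ℂ), (∀ n, s n ∈ S2 F) ∧ TendstoUniformly s t atTop}

/-- The difference set `F − F`. -/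
def diffSet {G : Type*} [Sub G] (F : Set G) : Set G := {x | ∃ u ∈ F, ∃ v ∈ F, x = u - v}

/-- `F ⊆ ℤ²` has Property A if `𝔘₂(F) = 𝔗₂⁺(F − F)`. -/
def PropertyA (F : Set (ℤ × ℤ)) : Prop :=
  U2 F = {t | IsTrigPoly2 t ∧ freq2 t ⊆ diffSet F ∧ ∀ p, ∃ r : ℝ, 0 ≤ r ∧ t p = (r : ℂ)}

/-!
Restricting a trigonometric polynomial on `𝕋²` to the circle `y = 0` projects its frequencies to the
first coordinate, undoes `Θ_α`, commutes with `q ↦ |q|²` and preserves uniform limits. For `β ≤ 1/2`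
this projection carries `F₂(α,β)` onto `F₁(α,β)`, because an integer within `1/2` of `jα` is
`θ_α(j)`. For `β ≤ 1/4` the same remark makes `θ_α` compatible with differences of elements of
`F₁(α,β)`, so that `Θ_α(t)` has its frequencies in `F₂(α,β) - F₂(α,β)` and Property A applies to it.
-/

theorem integrable_continuousMap {X E : Type*} [TopologicalSpace X] [CompactSpace X]
    [MeasurableSpace X] [OpensMeasurableSpace X] [NormedAddCommGroup E] {μ : Measure X}
    [IsFiniteMeasureOnCompacts μ] (f : C(X, E)) : Integrable f μ :=
  f.continuous.integrable_of_hasCompactSupport (.of_compactSpace f)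

theorem fourierCoeff_linearCombination_fourier {T : ℝ} [Fact (0 < T)] (c : ℤ →₀ ℂ) :
    fourierCoeff (Finsupp.linearCombination ℂ (fourier (T := T)) c) = c := by
  induction c using Finsupp.induction_linear with
  | zero => ext n; simp [fourierCoeff]
  | add c d hc hd =>
    rw [map_add, ContinuousMap.coe_add, fourierCoeff.add (integrable_continuousMap _)
      (integrable_continuousMap _), hc, hd, Finsupp.coe_add]
  | single j a =>
    ext n
    rw [Finsupp.linearCombination_single, ContinuousMap.coe_smul, fourierCoeff.const_smul,
      fourierCoeff_fourier, Finsupp.single_eq_pi_single]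
    simp [Pi.single_apply]

/-- The character `(x, y) ↦ e_j(x) e_k(y)` of `𝕋²` with frequency `n = (j, k)`, whose
linear combinations are the trigonometric polynomials. -/
def fourier2 (n : ℤ × ℤ) : C(𝕋 × 𝕋, ℂ) :=
  (fourier n.1).comp .fst * (fourier n.2).comp .snd

@[simp]
theorem fourier2_apply (n : ℤ × ℤ) (p : 𝕋 × 𝕋) :
    fourier2 n p = fourier n.1 p.1 * fourier n.2 p.2 :=
  rfl

theorem coeff2_mul (f g : 𝕋 → ℂ) (n : ℤ × ℤ) :
    coeff2 (fun p => f p.1 * g p.2) n = fourierCoeff f n.1 * fourierCoeff g n.2 := by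
  simp only [coeff2, fourierCoeff, smul_eq_mul]
  rw [← integral_mul_const]
  congr 1 with x
  rw [← integral_const_mul]
  congr 1 with y
  ring

theorem coeff2_fourier2 (m : ℤ × ℤ) : coeff2 (fourier2 m) = Pi.single m 1 := by
  ext n
  rw [show ⇑(fourier2 m) = fun p => fourier m.1 p.1 * fourier m.2 p.2 from rfl, coeff2_mul,
    fourierCoeff_fourier, fourierCoeff_fourier]
  simp only [Pi.single_apply, Prod.ext_iff, ite_and, mul_ite, mul_one, mul_zero]
  split_ifs <;> rfl

theorem coeff2_eq_integral_prod (f : C(𝕋 × 𝕋, ℂ)) (n : ℤ × ℤ) :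
    coeff2 f n =
      ∫ p, f p * fourier2 (-n) p ∂AddCircle.haarAddCircle.prod AddCircle.haarAddCircle := by
  simp only [coeff2, mul_assoc]
  exact integral_integral (integrable_continuousMap (f * fourier2 (-n)))

theorem coeff2_add (f g : C(𝕋 × 𝕋, ℂ)) : coeff2 (f + g : C(𝕋 × 𝕋, ℂ)) = coeff2 f + coeff2 g := by
  ext n
  simp only [Pi.add_apply, coeff2_eq_integral_prod, ContinuousMap.add_apply, add_mul]
  exact integral_add (integrable_continuousMap (f * fourier2 (-n)))
    (integrable_continuousMap (g * fourier2 (-n)))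

theorem coeff2_smul (a : ℂ) (f : 𝕋 × 𝕋 → ℂ) : coeff2 (a • f) = a • coeff2 f := by
  ext n
  simp only [coeff2, Pi.smul_apply, smul_eq_mul, mul_assoc, integral_const_mul]

/-- The trigonometric polynomial `Σ_j c(j) e_j` on `𝕋` with coefficient family `c`, as a bundled
continuous map so that it is integrable. -/
abbrev trigPoly1 (c : ℤ →₀ ℂ) : C(𝕋, ℂ) :=
  Finsupp.linearCombination ℂ fourier c

/-- The trigonometric polynomial `Σ_{j,k} c(j,k) e_j(x) e_k(y)` on `𝕋²` with coefficient family `c`,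
as a bundled continuous map so that it is integrable. -/
abbrev trigPoly2 (c : ℤ × ℤ →₀ ℂ) : C(𝕋 × 𝕋, ℂ) :=
  Finsupp.linearCombination ℂ fourier2 c

theorem coeff2_trigPoly2 (c : ℤ × ℤ →₀ ℂ) : coeff2 (trigPoly2 c) = c := by
  induction c using Finsupp.induction_linear with
  | zero => ext n; simp [coeff2]
  | add c d hc hd => rw [trigPoly2, map_add, coeff2_add, hc, hd, Finsupp.coe_add]
  | single m a =>
    ext n
    rw [trigPoly2, Finsupp.linearCombination_single, ContinuousMap.coe_smul, coeff2_smul,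
      coeff2_fourier2, Finsupp.single_eq_pi_single]
    simp [Pi.single_apply]

theorem coe_trigPoly1 (c : ℤ →₀ ℂ) :
    ⇑(trigPoly1 c) = fun x => ∑ j ∈ c.support, c j * fourier j x := by
  ext x
  simp [trigPoly1, Finsupp.linearCombination_apply, Finsupp.sum, ContinuousMap.sum_apply]

theorem coe_trigPoly2 (c : ℤ × ℤ →₀ ℂ) :
    ⇑(trigPoly2 c) = fun p => ∑ n ∈ c.support, c n * fourier n.1 p.1 * fourier n.2 p.2 := by
  ext p
  simp [trigPoly2, Finsupp.linearCombination_apply, Finsupp.sum, ContinuousMap.sum_apply, mul_assoc]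

theorem freq1_trigPoly1 (c : ℤ →₀ ℂ) : freq1 (trigPoly1 c) = c.support := by
  ext j
  simp [freq1, fourierCoeff_linearCombination_fourier]

theorem freq2_trigPoly2 (c : ℤ × ℤ →₀ ℂ) : freq2 (trigPoly2 c) = c.support := by
  ext n
  simp [freq2, coeff2_trigPoly2]

theorem mem_T1_iff {F : Set ℤ} {t : 𝕋 → ℂ} :
    t ∈ T1 F ↔ ∃ c ∈ Finsupp.supported ℂ ℂ F, ⇑(trigPoly1 c) = t := by
  constructor
  · rintro ⟨⟨c, rfl⟩, hF⟩
    rw [← coe_trigPoly1, freq1_trigPoly1] at hF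
    exact ⟨c, hF, coe_trigPoly1 c⟩
  · rintro ⟨c, hF, rfl⟩
    exact ⟨⟨c, coe_trigPoly1 c⟩, (freq1_trigPoly1 c).trans_subset hF⟩

theorem mem_T2_iff {F : Set (ℤ × ℤ)} {t : 𝕋 × 𝕋 → ℂ} :
    t ∈ T2 F ↔ ∃ c ∈ Finsupp.supported ℂ ℂ F, ⇑(trigPoly2 c) = t := by
  constructor
  · rintro ⟨⟨c, rfl⟩, hF⟩
    rw [← coe_trigPoly2, freq2_trigPoly2] at hF
    exact ⟨c, hF, coe_trigPoly2 c⟩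
  · rintro ⟨c, hF, rfl⟩
    exact ⟨⟨c, coe_trigPoly2 c⟩, (freq2_trigPoly2 c).trans_subset hF⟩

section Restriction

variable {F : Set (ℤ × ℤ)} {f : 𝕋 × 𝕋 → ℂ}

theorem trigPoly2_apply_zero_right (c : ℤ × ℤ →₀ ℂ) (x : 𝕋) :
    trigPoly2 c (x, 0) = trigPoly1 (c.mapDomain Prod.fst) x := by
  rw [trigPoly1, Finsupp.linearCombination_mapDomain]
  simp [trigPoly2, Finsupp.linearCombination_apply, Finsupp.sum, ContinuousMap.sum_apply]

theorem restrict_mem_T1 (hf : f ∈ T2 F) : (fun x => f (x, 0)) ∈ T1 (Prod.fst '' F) := by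
  obtain ⟨c, hc, rfl⟩ := mem_T2_iff.1 hf
  refine mem_T1_iff.2 ⟨_, ?_, funext fun x => (trigPoly2_apply_zero_right c x).symm⟩
  rw [← Finsupp.lmapDomain_supported]
  exact Submodule.mem_map_of_mem hc

theorem restrict_mem_S1 (hf : f ∈ S2 F) : (fun x => f (x, 0)) ∈ S1 (Prod.fst '' F) := by
  obtain ⟨q, hq, rfl⟩ := hf
  exact ⟨_, restrict_mem_T1 hq, rfl⟩

theorem restrict_mem_U1 (hf : f ∈ U2 F) : (fun x => f (x, 0)) ∈ U1 (Prod.fst '' F) := by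
  obtain ⟨hpoly, s, hs, hlim⟩ := hf
  exact ⟨(restrict_mem_T1 ⟨hpoly, Set.Subset.rfl⟩).1, fun n x => s n (x, 0),
    fun n => restrict_mem_S1 (hs n), hlim.comp fun x => (x, 0)⟩

end Restriction

theorem Theta_trigPoly1 (α : ℝ) (c : ℤ →₀ ℂ) :
    Theta α (trigPoly1 c) = trigPoly2 (c.mapDomain fun j => (j, thetaA α j)) := by
  ext p
  rw [Theta, fourierCoeff_linearCombination_fourier, tsum_eq_sum (s := c.support)]
  · rw [trigPoly2, Finsupp.linearCombination_mapDomain]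
    simp [Finsupp.linearCombination_apply, Finsupp.sum, ContinuousMap.sum_apply, mul_assoc]
  · intro j hj
    simp [Finsupp.notMem_support_iff.1 hj]

theorem Theta_mem_T2 (α : ℝ) {F : Set ℤ} {t : 𝕋 → ℂ} (ht : t ∈ T1 F) :
    Theta α t ∈ T2 ((fun j => (j, thetaA α j)) '' F) := by
  obtain ⟨c, hc, rfl⟩ := mem_T1_iff.1 ht
  refine mem_T2_iff.2 ⟨_, ?_, (Theta_trigPoly1 α c).symm⟩
  rw [← Finsupp.lmapDomain_supported]
  exact Submodule.mem_map_of_mem hc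

theorem Theta_apply_zero_right (α : ℝ) {t : 𝕋 → ℂ} (ht : IsTrigPoly1 t) (x : 𝕋) :
    Theta α t (x, 0) = t x := by
  obtain ⟨c, rfl⟩ := ht
  rw [← coe_trigPoly1, Theta_trigPoly1, trigPoly2_apply_zero_right, ← Finsupp.mapDomain_comp]
  exact DFunLike.congr_fun (congrArg trigPoly1 Finsupp.mapDomain_id) x

section BohrSets

variable {α β γ : ℝ}

theorem thetaA_eq_of_abs_sub_lt {j k : ℤ} (h : |(k : ℝ) - j * α| < 1 / 2) : thetaA α j = k := by
  rw [abs_lt] at h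
  rw [thetaA, Int.ceil_eq_iff]
  constructor <;> linarith

theorem thetaA_sub {u v : ℤ} (h : β + γ ≤ 1 / 2) (hu : u ∈ F1set α β) (hv : v ∈ F1set α γ) :
    thetaA α (u - v) = thetaA α u - thetaA α v := by
  rw [F1set, Set.mem_ofPred_eq] at hu hv
  apply thetaA_eq_of_abs_sub_lt
  calc |((thetaA α u - thetaA α v : ℤ) : ℝ) - (u - v : ℤ) * α|
      = |(thetaA α u - u * α) - (thetaA α v - v * α)| := by push_cast; ring_nf
    _ ≤ |thetaA α u - u * α| + |thetaA α v - v * α| := abs_sub _ _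
    _ < 1 / 2 := by linarith

theorem image_fst_F2set (hβ : β ≤ 1 / 2) : Prod.fst '' F2set α β = F1set α β := by
  ext j
  constructor
  · rintro ⟨⟨j, k⟩, hjk : |(k : ℝ) - j * α| < β, rfl⟩
    rwa [F1set, Set.mem_ofPred_eq, thetaA_eq_of_abs_sub_lt (hjk.trans_le hβ)]
  · exact fun hj => ⟨(j, thetaA α j), hj, rfl⟩

theorem image_thetaA_diffSet_F1set_subset (hβ : β ≤ 1 / 4) :
    (fun j => (j, thetaA α j)) '' diffSet (F1set α β) ⊆ diffSet (F2set α β) := by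
  rintro _ ⟨_, ⟨u, hu, v, hv, rfl⟩, rfl⟩
  refine ⟨(u, thetaA α u), hu, (v, thetaA α v), hv, ?_⟩
  exact congrArg (u - v, ·) (thetaA_sub (by linarith) hu hv)

end BohrSets

/-- For `0 < β ≤ 1/4`, if `F₂(α,β)` has Property A, `t` is a trigonometric polynomial with
frequencies in `F₁(α,β) − F₁(α,β)`, and `Θ_α(t) ≥ 0` on `𝕋²`, then `t ∈ 𝔘₁(F₁(α,β))`. -/
theorem statement9 (α β : ℝ) (hβ0 : 0 < β) (hβ : β ≤ 1 / 4)
    (hA : PropertyA (F2set α β))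
    (t : 𝕋 → ℂ) (ht : IsTrigPoly1 t) (hfreq : freq1 t ⊆ diffSet (F1set α β))
    (hpos : ∀ q : 𝕋 × 𝕋, ∃ r : ℝ, 0 ≤ r ∧ Theta α t q = (r : ℂ)) :
    t ∈ U1 (F1set α β) := by
  have hT : Theta α t ∈ T2 (diffSet (F2set α β)) :=
    (Theta_mem_T2 α ⟨ht, hfreq⟩).imp_right fun h =>
      h.trans (image_thetaA_diffSet_F1set_subset hβ)
  have hU : Theta α t ∈ U2 (F2set α β) := by
    rw [hA]
    exact ⟨hT.1, hT.2, hpos⟩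
  have ht_eq : (fun x => Theta α t (x, 0)) = t := funext (Theta_apply_zero_right α ht)
  rw [← image_fst_F2set (by linarith), ← ht_eq]
  exact restrict_mem_U1 hU
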